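/- Let Ω = [0, R] ⊂ ℝ, R > 0, written as Ω = {v : F_0 + vF_1 ⪰ 0} with F_0 = diag(0, R), F_1 = diag(1, −1). For k = 1,…,n let α_k, β_k, b_k ≥ 0 and c_k ≤ −α_k b_k² − β_k b_k⁴, and let g(v) = min_{k=1,…,2n} max_{ℓ=1,2} g_ℓ^k(v), where g_1^k(v) = g_2^k(v) = α_k(v−b_k)² + β_k(v−b_k)⁴ + c_k, g_1^{n+k}(v) = −(α_k b_k + β_k b_k³)v + (α_k b_k² + β_k b_k⁴ + c_k), g_2^{n+k}(v) = c_k, for k=1,…,n. Consider the moment problem (V): minimize E_μ^Ω[g(ω)] over probability measures μ on Ω subject to E_μ^Ω[ω] ≤ γ_1 and E_μ^Ω[ω²] ≤ γ_2. Consider the SDP (V1): maximize −λ_1γ_1 − λ_2γ_2 − λ_3 over λ ∈ ℝ_+² × ℝ, δ_k ∈ [0,1], 2×2 PSD matrices Z_k, Z_k′, and 3×3 PSD matrices Q_k, Q_k′ (k=1,…,n), subject to, for each k: tr(Q_k B_0) = α_k b_k² + β_k b_k⁴ + c_k + λ_3 − tr(Z_k F_0); tr(Q_k B_1) = −2α_k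 b_k − 4β_k b_k³ + λ_1 − tr(Z_k F_1); tr(Q_k B_2) = α_k + 6β_k b_k² + λ_2; tr(Q_k B_3) = −4β_k b_k; tr(Q_k B_4) = β_k; tr(Q_k′ B_0) = δ_k α_k b_k² + δ_k β_k b_k⁴ + c_k + λ_3 − tr(Z_k′ F_0); tr(Q_k′ B_1) = −δ_k α_k b_k − δ_k β_k b_k³ + λ_1 − tr(Z_k′ F_1); tr(Q_k′ B_2) = λ_2; tr(Q_k′ B_3) = tr(Q_k′ B_4) = 0. Assume (V) admits a minimizer and (γ_1, γ_2, 1) ∈ int{{(E_μ^Ω[ω], E_μ^Ω[ω²], E_μ^Ω[1]) : μ a non-negative finite Borel measure on Ω} + ℝ_+² × {0}}. Then min(V) = max(V1). -/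

import Mathlib

open MeasureTheory Matrix
open scoped BigOperators

noncomputable section

def B0 : Matrix (Fin 3) (Fin 3) ℝ := !![1, 0, 0; 0, 0, 0; 0, 0, 0]
def B1 : Matrix (Fin 3) (Fin 3) ℝ := !![0, 1, 0; 1, 0, 0; 0, 0, 0]
def B2 : Matrix (Fin 3) (Fin 3) ℝ := !![0, 0, 1; 0, 1, 0; 1, 0, 0]
def B3 : Matrix (Fin 3) (Fin 3) ℝ := !![0, 0, 0; 0, 0, 1; 0, 1, 0]
def B4 : Matrix (Fin 3) (Fin 3) ℝ := !![0, 0, 0; 0, 0, 0; 0, 0, 1]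

/-- The piecewise SOS-convex function
`g(v) = min_{k=1,…,2n} max_{ℓ=1,2} g_ℓ^k(v)` of the revenue problem: the
first `n` pieces are `α_k (v−b_k)² + β_k (v−b_k)⁴ + c_k` (both `ℓ` give the
same polynomial) and the last `n` pieces are
`max (−(α_k b_k + β_k b_k³) v + (α_k b_k² + β_k b_k⁴ + c_k)) c_k`. -/
def gRev {n : ℕ} [NeZero n] (al be b c : Fin n → ℝ) (v : ℝ) : ℝ :=
  Finset.univ.inf' Finset.univ_nonempty fun kk : Fin 2 × Fin n =>
    if kk.1 = 0 then
      al kk.2 * (v - b kk.2) ^ 2 + be kk.2 * (v - b kk.2) ^ 4 + c kk.2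
    else
      max (-(al kk.2 * b kk.2 + be kk.2 * b kk.2 ^ 3) * v
            + (al kk.2 * b kk.2 ^ 2 + be kk.2 * b kk.2 ^ 4 + c kk.2))
          (c kk.2)

/-- The value set of the revenue moment problem (V). -/
def RevVals {n : ℕ} [NeZero n] (al be b c : Fin n → ℝ) (R γ1 γ2 : ℝ) : Set ℝ :=
  {val | ∃ μ : Measure ℝ, IsProbabilityMeasure μ ∧ μ (Set.Icc 0 R)ᶜ = 0 ∧
    (∫ ω, ω ∂μ) ≤ γ1 ∧ (∫ ω, ω ^ 2 ∂μ) ≤ γ2 ∧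
    val = ∫ ω, gRev al be b c ω ∂μ}

/-- The value set of the SDP (V1). -/
def RevSDPVals {n : ℕ} (al be b c : Fin n → ℝ) (R γ1 γ2 : ℝ) : Set ℝ :=
  {val | ∃ (lam1 lam2 lam3 : ℝ) (δ : Fin n → ℝ)
      (Z Z' : Fin n → Matrix (Fin 2) (Fin 2) ℝ)
      (Q Q' : Fin n → Matrix (Fin 3) (Fin 3) ℝ),
    0 ≤ lam1 ∧ 0 ≤ lam2 ∧ (∀ k, 0 ≤ δ k ∧ δ k ≤ 1) ∧
    (∀ k, (Z k).PosSemidef) ∧ (∀ k, (Z' k).PosSemidef) ∧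
    (∀ k, (Q k).PosSemidef) ∧ (∀ k, (Q' k).PosSemidef) ∧
    (∀ k, (Q k * B0).trace
      = al k * b k ^ 2 + be k * b k ^ 4 + c k + lam3
        - (Z k * !![(0:ℝ), 0; 0, R]).trace) ∧
    (∀ k, (Q k * B1).trace
      = -2 * al k * b k - 4 * be k * b k ^ 3 + lam1
        - (Z k * !![(1:ℝ), 0; 0, -1]).trace) ∧
    (∀ k, (Q k * B2).trace = al k + 6 * be k * b k ^ 2 + lam2) ∧
    (∀ k, (Q k * B3).trace = -4 * be k * b k) ∧
    (∀ k, (Q k * B4).trace = be k) ∧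
    (∀ k, (Q' k * B0).trace
      = δ k * al k * b k ^ 2 + δ k * be k * b k ^ 4 + c k + lam3
        - (Z' k * !![(0:ℝ), 0; 0, R]).trace) ∧
    (∀ k, (Q' k * B1).trace
      = -(δ k * al k * b k) - δ k * be k * b k ^ 3 + lam1
        - (Z' k * !![(1:ℝ), 0; 0, -1]).trace) ∧
    (∀ k, (Q' k * B2).trace = lam2) ∧
    (∀ k, (Q' k * B3).trace = 0) ∧ (∀ k, (Q' k * B4).trace = 0) ∧
    val = -lam1 * γ1 - lam2 * γ2 - lam3}

/-! The cone `K` of all `((∫ ω dμ + s₁, ∫ ω² dμ + s₂, μ(Ω)), ∫ g dμ)` with `μ` a finite measure on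
`Ω` and `s₁, s₂ ≥ 0` contains `((γ₁, γ₂, 1), t)` for each value `t` of the moment problem and for no
other `t`. Since `(γ₁, γ₂, 1)` is interior to the projection of `K`, Riesz extension yields a linear
functional supporting the lower boundary of `K` there; its coefficients are, up to sign, multipliers
`λ₁, λ₂ ≥ 0` and `λ₃` with dual value the infimum and `g(v) + λ₁ v + λ₂ v² + λ₃ ≥ 0` on `Ω`.

This inequality holds for the minimum `g` iff it holds for every piece. For a polynomial piece the
left-hand side is a convex quartic; it lies above its tangent line at a minimizer on `[0, R]`, with
difference an explicit sum of squares, and the tangent line is a nonnegative combination of `1`, `v`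
and `R - v`. This gives the first SDP certificate of index `k`. For a maximum of two affine
functions, a theorem of the alternative for convex functions replaces the maximum by a convex
combination with weight `δ_k`, and the resulting convex quadratic has the same kind of certificate.
-/

open Set PointedCone

section Cone

variable {E : Type*} [AddCommGroup E] [Module ℝ E] {K : PointedCone ℝ (E × ℝ)} {x₀ : E} {p : ℝ}

lemma exists_smul_add_mem_of_mem_interior [TopologicalSpace E] [ContinuousAdd E]
    [ContinuousSMul ℝ E] (hx₀ : x₀ ∈ interior (Prod.fst '' (K : Set (E × ℝ)))) (x : E) :
    ∃ c t : ℝ, (c • x₀ + x, t) ∈ K := by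
  have hcont : Filter.Tendsto (fun ε : ℝ => x₀ + ε • x) (nhdsWithin 0 (Ioi 0)) (nhds x₀) := by
    have : ContinuousAt (fun ε : ℝ => x₀ + ε • x) 0 := by fun_prop
    simpa using this.tendsto.mono_left nhdsWithin_le_nhds
  obtain ⟨ε, hmem, hε : 0 < ε⟩ := ((hcont.eventually (mem_interior_iff_mem_nhds.1 hx₀)).and
    self_mem_nhdsWithin).exists
  obtain ⟨⟨y, t⟩, hyK, rfl : y = x₀ + ε • x⟩ := hmem
  exact ⟨ε⁻¹, ε⁻¹ * t, by
    simpa [smul_smul, hε.ne'] using K.smul_mem (inv_nonneg.2 hε.le) hyK⟩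

lemma mul_le_of_smul_mem (hp : IsGLB {t | (x₀, t) ∈ K} p) {s t : ℝ} (h : (s • x₀, t) ∈ K) :
    s * p ≤ t := by
  rcases lt_or_ge 0 s with hs | hs
  · have hmem : (x₀, s⁻¹ * t) ∈ K := by
      simpa [smul_smul, inv_mul_cancel₀ hs.ne'] using K.smul_mem (inv_nonneg.2 hs.le) h
    calc s * p ≤ s * (s⁻¹ * t) := mul_le_mul_of_nonneg_left (hp.1 hmem) hs.le
      _ = t := mul_inv_cancel_left₀ hs.ne' t
  · have hpos : 0 < 1 - s := by linarith
    have hlb : (p - t) / (1 - s) ∈ lowerBounds {t | (x₀, t) ∈ K} := by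
      intro u hu
      have hmem : (x₀, t + (1 - s) * u) ∈ K := by
        simpa [← add_smul] using add_mem h (K.smul_mem hpos.le hu)
      rw [div_le_iff₀ hpos]
      linarith [hp.1 hmem]
    linarith [(div_le_iff₀ hpos).1 (hp.2 hlb)]

lemma nonneg_of_mem_sup_span (hp : IsGLB {t | (x₀, t) ∈ K} p) {t : ℝ}
    (ht : (0, t) ∈ K ⊔ ofSubmodule (Submodule.span ℝ {(x₀, p)})) : 0 ≤ t := by
  obtain ⟨⟨y, u⟩, hyK, z, hz, hsum⟩ := Submodule.mem_sup.1 ht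
  obtain ⟨s, rfl⟩ := Submodule.mem_span_singleton.1 hz
  have hy : y + s • x₀ = 0 := congrArg Prod.fst hsum
  have hu : u + s * p = t := congrArg Prod.snd hsum
  have hle : -s * p ≤ u := mul_le_of_smul_mem hp <| by
    rwa [neg_smul, ← eq_neg_of_add_eq_zero_left hy]
  linarith

theorem exists_linearMap_eq_and_le_of_mem_interior [TopologicalSpace E] [ContinuousAdd E]
    [ContinuousSMul ℝ E] (hx₀ : x₀ ∈ interior (Prod.fst '' (K : Set (E × ℝ))))
    (hp : IsGLB {t | (x₀, t) ∈ K} p) :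
    ∃ φ : E →ₗ[ℝ] ℝ, φ x₀ = p ∧ ∀ x t, (x, t) ∈ K → φ x ≤ t := by
  -- Adding the line through `(x₀, p)` to the cone forces the extension to vanish on it.
  let L : PointedCone ℝ (E × ℝ) := K ⊔ ofSubmodule (Submodule.span ℝ {(x₀, p)})
  have hKL {z : E × ℝ} (hz : z ∈ K) : z ∈ L := Submodule.mem_sup_left hz
  have hline (s : ℝ) : s • (x₀, p) ∈ L :=
    Submodule.mem_sup_right (Submodule.smul_mem _ s (Submodule.mem_span_singleton_self _))
  let V : Submodule ℝ (E × ℝ) := Submodule.prod ⊥ ⊤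
  have hnonneg : ∀ z : V, (z : E × ℝ) ∈ L → 0 ≤ (z : E × ℝ).2 := by
    rintro ⟨⟨x, t⟩, rfl : x = 0, _⟩ hz
    exact nonneg_of_mem_sup_span hp hz
  have hdense (y : E × ℝ) : ∃ z : V, (z : E × ℝ) + y ∈ L := by
    obtain ⟨c, u, hcu⟩ := exists_smul_add_mem_of_mem_interior hx₀ y.1
    refine ⟨⟨(0, u - c * p - y.2), by simp [V]⟩, ?_⟩
    convert add_mem (hKL hcu) (hline (-c)) using 1
    ext <;> simp [sub_eq_add_neg]
  obtain ⟨G, hG, hGL⟩ := riesz_extension L ((LinearMap.snd ℝ E ℝ).toPMap V) hnonneg hdense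
  have hG_mk (x : E) (t : ℝ) : G (x, t) = G (x, 0) + t := by
    have hG_snd : G (0, t) = t := hG ⟨(0, t), by simp [V]⟩
    simpa [hG_snd] using map_add G (x, 0) (0, t)
  have hG_line : G (x₀, p) = 0 := by
    have h_pos := hGL _ (hline 1)
    have h_neg := hGL _ (hline (-1))
    rw [map_smul, smul_eq_mul] at h_pos h_neg
    linarith
  refine ⟨-G ∘ₗ LinearMap.inl ℝ E ℝ, ?_, fun x t hxt => ?_⟩
  · exact (eq_neg_of_add_eq_zero_right ((hG_mk x₀ p).symm.trans hG_line)).symm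
  · exact neg_le_iff_add_nonneg'.2 ((hG_mk x t).symm ▸ hGL _ (hKL hxt))

end Cone

section Moments

variable {X E : Type*} [MeasurableSpace X] [NormedAddCommGroup E] [NormedSpace ℝ E]

/-- The cone of moment vectors `∫ h dμ` of the finite measures `μ` concentrated on `Ω` which
integrate `h`; integrability is required so that no junk value of the integral enters. -/
def momentCone (Ω : Set X) (h : X → E) : PointedCone ℝ E where
  carrier := {x | ∃ μ : Measure X, IsFiniteMeasure μ ∧ μ Ωᶜ = 0 ∧ Integrable h μ ∧
    ∫ ω, h ω ∂μ = x}
  add_mem' := by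
    rintro _ _ ⟨μ, _, hμ, hhμ, rfl⟩ ⟨ν, _, hν, hhν, rfl⟩
    exact ⟨μ + ν, inferInstance, by simp [hμ, hν], hhμ.add_measure hhν,
      integral_add_measure hhμ hhν⟩
  zero_mem' := ⟨0, inferInstance, by simp, integrable_zero_measure, integral_zero_measure h⟩
  smul_mem' := by
    rintro (c : NNReal) _ ⟨μ, _, hμ, hhμ, rfl⟩
    exact ⟨c • μ, inferInstance, by simp [hμ], hhμ.smul_measure_nnreal,
      integral_smul_nnreal_measure h c⟩

lemma apply_mem_momentCone [MeasurableSingletonClass X] [CompleteSpace E] {Ω : Set X} (h : X → E)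
    {v : X} (hv : v ∈ Ω) : h v ∈ momentCone Ω h :=
  ⟨Measure.dirac v, inferInstance, by simpa using hv, integrable_dirac (by simp),
    integral_dirac h v⟩

end Moments

lemma integrable_of_continuousOn_of_compl_null {X E : Type*} [TopologicalSpace X] [T2Space X]
    [MeasurableSpace X] [OpensMeasurableSpace X] [NormedAddCommGroup E] {Ω : Set X}
    (hΩ : IsCompact Ω) {f : X → E} (hf : ContinuousOn f Ω) {μ : Measure X} [IsFiniteMeasure μ]
    (hμ : μ Ωᶜ = 0) : Integrable f μ := by
  have hrestrict : μ.restrict Ω = μ := Measure.restrict_eq_self_of_ae_mem hμ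
  simpa only [IntegrableOn, hrestrict] using hf.integrableOn_compact (μ := μ) hΩ

section MomentProblem

/-- The triples of first moment, second moment and total mass of the finite measures on `Ω`, where
the two moments may be increased by slacks. -/
def momentSet (Ω : Set ℝ) : Set (ℝ × ℝ × ℝ) :=
  {q | ∃ μ : Measure ℝ, IsFiniteMeasure μ ∧ μ Ωᶜ = 0 ∧ ∃ s1 s2 : ℝ, 0 ≤ s1 ∧ 0 ≤ s2 ∧
    q.1 = (∫ ω, ω ∂μ) + s1 ∧ q.2.1 = (∫ ω, ω ^ 2 ∂μ) + s2 ∧ q.2.2 = (μ univ).toReal}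

/-- The values `∫ g dμ` of the moment problem on `Ω`: `μ` runs over the probability measures on `Ω`
with first two moments at most `γ₁` and `γ₂`. -/
def momentValues (Ω : Set ℝ) (g : ℝ → ℝ) (γ₁ γ₂ : ℝ) : Set ℝ :=
  {val | ∃ μ : Measure ℝ, IsProbabilityMeasure μ ∧ μ Ωᶜ = 0 ∧
    (∫ ω, ω ∂μ) ≤ γ₁ ∧ (∫ ω, ω ^ 2 ∂μ) ≤ γ₂ ∧ val = ∫ ω, g ω ∂μ}

/-- The multipliers `(λ₁, λ₂, λ₃)` that are feasible for the Lagrange dual of the moment problem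
on `Ω` with objective `g`. -/
def dualFeasible (Ω : Set ℝ) (g : ℝ → ℝ) : Set (ℝ × ℝ × ℝ) :=
  {l | 0 ≤ l.1 ∧ 0 ≤ l.2.1 ∧ ∀ v ∈ Ω, 0 ≤ g v + l.1 * v + l.2.1 * v ^ 2 + l.2.2}

/-- The cone of moments and objective values `((∫ ω dμ + s₁, ∫ ω² dμ + s₂, μ(Ω)), ∫ g dμ)` over
finite measures `μ` on `Ω` and slacks `s₁, s₂ ≥ 0`. -/
def slackMomentCone (Ω : Set ℝ) (g : ℝ → ℝ) : PointedCone ℝ ((ℝ × ℝ × ℝ) × ℝ) :=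
  momentCone Ω (fun v => ((v, v ^ 2, 1), g v)) ⊔
    Submodule.prod (Submodule.prod (positive ℝ ℝ) (Submodule.prod (positive ℝ ℝ) ⊥)) ⊥

variable {Ω : Set ℝ} {g : ℝ → ℝ} {γ₁ γ₂ : ℝ}

lemma integral_quadraticMoments (hΩ : IsCompact Ω) (hg : ContinuousOn g Ω) {μ : Measure ℝ}
    [IsFiniteMeasure μ] (hμ : μ Ωᶜ = 0) :
    ∫ ω, ((ω, ω ^ 2, (1 : ℝ)), g ω) ∂μ
      = ((∫ ω, ω ∂μ, ∫ ω, ω ^ 2 ∂μ, (μ univ).toReal), ∫ ω, g ω ∂μ) := by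
  have h_int {f : ℝ → ℝ} (hf : ContinuousOn f Ω) : Integrable f μ :=
    integrable_of_continuousOn_of_compl_null hΩ hf hμ
  have h₁ : Integrable (fun ω => ω) μ := h_int continuousOn_id
  have h₂ := h_int (continuousOn_pow 2)
  have h₃ := integrable_const (μ := μ) (1 : ℝ)
  rw [integral_pair (h₁.prodMk (h₂.prodMk h₃)) (h_int hg), integral_pair h₁ (h₂.prodMk h₃),
    integral_pair h₂ h₃, integral_const, smul_eq_mul, mul_one, Measure.real]

lemma mk_mem_slackMomentCone (hΩ : IsCompact Ω) (hg : ContinuousOn g Ω) {x y m t : ℝ} :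
    ((x, y, m), t) ∈ slackMomentCone Ω g ↔ ∃ μ : Measure ℝ, IsFiniteMeasure μ ∧ μ Ωᶜ = 0 ∧
      (∃ s1 s2 : ℝ, 0 ≤ s1 ∧ 0 ≤ s2 ∧ x = (∫ ω, ω ∂μ) + s1 ∧ y = (∫ ω, ω ^ 2 ∂μ) + s2 ∧
        m = (μ univ).toReal) ∧ t = ∫ ω, g ω ∂μ := by
  rw [slackMomentCone, Submodule.mem_sup]
  constructor
  · rintro ⟨_, ⟨μ, hfin, hμ, -, rfl⟩, ⟨⟨s₁, s₂, m₀⟩, t₀⟩, ⟨⟨hs₁, hs₂, hm₀⟩, ht₀⟩, hsum⟩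
    obtain rfl : m₀ = 0 := hm₀
    obtain rfl : t₀ = 0 := ht₀
    rw [integral_quadraticMoments hΩ hg hμ] at hsum
    simp only [Prod.mk_add_mk, add_zero, Prod.mk.injEq] at hsum
    obtain ⟨⟨rfl, rfl, rfl⟩, rfl⟩ := hsum
    exact ⟨μ, hfin, hμ, ⟨s₁, s₂, hs₁, hs₂, rfl, rfl, rfl⟩, rfl⟩
  · rintro ⟨μ, hfin, hμ, ⟨s₁, s₂, hs₁, hs₂, rfl, rfl, rfl⟩, rfl⟩
    refine ⟨_, ⟨μ, hfin, hμ, integrable_of_continuousOn_of_compl_null hΩ (by fun_prop) hμ, rfl⟩,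
      ((s₁, s₂, 0), 0), ⟨⟨hs₁, hs₂, rfl⟩, rfl⟩, ?_⟩
    rw [integral_quadraticMoments hΩ hg hμ]
    simp

lemma image_fst_slackMomentCone (hΩ : IsCompact Ω) (hg : ContinuousOn g Ω) :
    Prod.fst '' (slackMomentCone Ω g : Set ((ℝ × ℝ × ℝ) × ℝ)) = momentSet Ω := by
  ext ⟨x, y, m⟩
  simp [momentSet, mk_mem_slackMomentCone hΩ hg]

lemma mk_one_mem_slackMomentCone (hΩ : IsCompact Ω) (hg : ContinuousOn g Ω) {t : ℝ} :
    ((γ₁, γ₂, 1), t) ∈ slackMomentCone Ω g ↔ t ∈ momentValues Ω g γ₁ γ₂ := by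
  rw [mk_mem_slackMomentCone hΩ hg]
  constructor
  · rintro ⟨μ, -, hμ, ⟨s₁, s₂, hs₁, hs₂, rfl, rfl, hmass⟩, rfl⟩
    exact ⟨μ, ⟨(ENNReal.toReal_eq_one_iff _).1 hmass.symm⟩, hμ, by linarith, by linarith, rfl⟩
  · rintro ⟨μ, hprob, hμ, h₁, h₂, rfl⟩
    exact ⟨μ, inferInstance, hμ, ⟨_, _, sub_nonneg.2 h₁, sub_nonneg.2 h₂, by ring, by ring,
      by simp⟩, rfl⟩

theorem exists_dualFeasible_of_isGLB (hΩ : IsCompact Ω) (hg : ContinuousOn g Ω) {p : ℝ}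
    (hγ : (γ₁, γ₂, 1) ∈ interior (momentSet Ω)) (hp : IsGLB (momentValues Ω g γ₁ γ₂) p) :
    ∃ l ∈ dualFeasible Ω g, p = -l.1 * γ₁ - l.2.1 * γ₂ - l.2.2 := by
  obtain ⟨φ, hφp, hφ⟩ := exists_linearMap_eq_and_le_of_mem_interior
    (K := slackMomentCone Ω g) (x₀ := (γ₁, γ₂, 1)) (p := p)
    (by rwa [image_fst_slackMomentCone hΩ hg])
    (by simpa only [mk_one_mem_slackMomentCone hΩ hg, ofPred_mem_eq] using hp)
  have hφ_mk (x y m : ℝ) : φ (x, y, m) = x * φ (1, 0, 0) + y * φ (0, 1, 0) + m * φ (0, 0, 1) := by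
    simp_rw [← smul_eq_mul, ← map_smul, ← map_add]
    simp
  have hslack {x : ℝ × ℝ × ℝ} (hx : x ∈ Submodule.prod (positive ℝ ℝ)
      (Submodule.prod (positive ℝ ℝ) (⊥ : PointedCone ℝ ℝ))) : φ x ≤ 0 :=
    hφ x 0 (Submodule.mem_sup_right ⟨hx, rfl⟩)
  refine ⟨(-φ (1, 0, 0), -φ (0, 1, 0), -φ (0, 0, 1)), ⟨?_, ?_, fun v hv => ?_⟩, ?_⟩
  · exact neg_nonneg.2 (hslack (by simp))
  · exact neg_nonneg.2 (hslack (by simp))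
  · have := hφ (v, v ^ 2, 1) (g v)
      (Submodule.mem_sup_left (apply_mem_momentCone (fun v => ((v, v ^ 2, (1 : ℝ)), g v)) hv))
    rw [hφ_mk] at this
    linarith
  · rw [hφ_mk] at hφp
    linarith

theorem le_of_dualFeasible_of_mem_momentValues (hΩ : IsCompact Ω) (hg : ContinuousOn g Ω)
    {l : ℝ × ℝ × ℝ} (hl : l ∈ dualFeasible Ω g) {t : ℝ} (ht : t ∈ momentValues Ω g γ₁ γ₂) :
    -l.1 * γ₁ - l.2.1 * γ₂ - l.2.2 ≤ t := by
  obtain ⟨μ, _, hμ, hγ₁, hγ₂, rfl⟩ := ht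
  obtain ⟨hl₁, hl₂, hpos⟩ := hl
  have h_int {f : ℝ → ℝ} (hf : ContinuousOn f Ω) : Integrable f μ :=
    integrable_of_continuousOn_of_compl_null hΩ hf hμ
  have h₁ : Integrable (fun ω => l.1 * ω) μ := h_int (by fun_prop)
  have h₂ : Integrable (fun ω => l.2.1 * ω ^ 2) μ := h_int (by fun_prop)
  have h₀₁ : Integrable (fun ω => g ω + l.1 * ω) μ := (h_int hg).add h₁
  have h₀₁₂ : Integrable (fun ω => g ω + l.1 * ω + l.2.1 * ω ^ 2) μ := h₀₁.add h₂
  have hlagrange : 0 ≤ ∫ ω, (g ω + l.1 * ω + l.2.1 * ω ^ 2 + l.2.2) ∂μ :=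
    integral_nonneg_of_ae (Filter.mem_of_superset (show Ω ∈ ae μ from hμ) hpos)
  rw [integral_add h₀₁₂ (integrable_const _), integral_add h₀₁ h₂,
    integral_add (h_int hg) h₁, integral_const_mul, integral_const_mul, integral_const,
    probReal_univ, one_smul] at hlagrange
  linarith [mul_le_mul_of_nonneg_left hγ₁ hl₁, mul_le_mul_of_nonneg_left hγ₂ hl₂]

end MomentProblem

section ConvexAlternative

lemma nonneg_and_nonneg_of_forall_add_mul_nonneg {a b : ℝ} (h : ∀ t > 0, 0 ≤ a + t * b) :
    0 ≤ a ∧ 0 ≤ b := by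
  constructor
  · have hlim : Filter.Tendsto (fun t : ℝ => a + t * b) (nhdsWithin 0 (Ioi 0)) (nhds a) := by
      have : ContinuousAt (fun t : ℝ => a + t * b) 0 := by fun_prop
      simpa using this.tendsto.mono_left nhdsWithin_le_nhds
    exact ge_of_tendsto hlim (eventually_mem_nhdsWithin.mono h)
  · by_contra! hb
    have h_neg : 0 < (|a| + 1) / -b := div_pos (by positivity) (neg_pos.2 hb)
    have hcancel : (|a| + 1) / -b * b = -(|a| + 1) := by
      rw [div_neg, neg_mul, div_mul_cancel₀ _ hb.ne]
    linarith [h _ h_neg, le_abs_self a]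

variable {E : Type*} {s : Set E} {f g : E → ℝ}

lemma isOpen_setOf_exists_lt_and_lt : IsOpen {z : ℝ × ℝ | ∃ v ∈ s, f v < z.1 ∧ g v < z.2} := by
  have : {z : ℝ × ℝ | ∃ v ∈ s, f v < z.1 ∧ g v < z.2} = ⋃ v ∈ s, Ioi (f v) ×ˢ Ioi (g v) := by
    ext
    simp [and_left_comm]
  rw [this]
  exact isOpen_biUnion fun _ _ => isOpen_Ioi.prod isOpen_Ioi

variable [AddCommGroup E] [Module ℝ E]

lemma convex_setOf_exists_lt_and_lt (hf : ConvexOn ℝ s f) (hg : ConvexOn ℝ s g) :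
    Convex ℝ {z : ℝ × ℝ | ∃ v ∈ s, f v < z.1 ∧ g v < z.2} := by
  rintro z ⟨v, hv, hfz, hgz⟩ y ⟨u, hu, hfy, hgy⟩ a b ha hb hab
  have h_lt {x₁ x₂ y₁ y₂ : ℝ} (h₁ : x₁ < y₁) (h₂ : x₂ < y₂) :
      a * x₁ + b * x₂ < a * y₁ + b * y₂ := by
    have := convex_Ioi (0 : ℝ) (sub_pos.2 h₁) (sub_pos.2 h₂) ha hb hab
    simp only [smul_eq_mul, mem_Ioi] at this
    linarith
  exact ⟨a • v + b • u, hf.1 hv hu ha hb hab, (hf.2 hv hu ha hb hab).trans_lt (h_lt hfz hfy),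
    (hg.2 hv hu ha hb hab).trans_lt (h_lt hgz hgy)⟩

lemma exists_multipliers_of_max_nonneg (hf : ConvexOn ℝ s f) (hg : ConvexOn ℝ s g)
    (hs : s.Nonempty) (h : ∀ v ∈ s, 0 ≤ max (f v) (g v)) :
    ∃ a b : ℝ, 0 ≤ a ∧ 0 ≤ b ∧ 0 < a + b ∧ ∀ v ∈ s, 0 ≤ a * f v + b * g v := by
  obtain ⟨φ, hφ⟩ := geometric_hahn_banach_point_open (x := 0)
    (convex_setOf_exists_lt_and_lt hf hg) isOpen_setOf_exists_lt_and_lt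
    fun ⟨v, hv, hfv, hgv⟩ => (h v hv).not_gt (max_lt hfv hgv)
  have hφ_mk (x y : ℝ) : φ (x, y) = x * φ (1, 0) + y * φ (0, 1) := by
    simp_rw [← smul_eq_mul, ← map_smul, ← map_add]
    simp
  have hpos {v : E} (hv : v ∈ s) {t u : ℝ} (ht : 0 < t) (hu : 0 < u) :
      0 < (f v + t) * φ (1, 0) + (g v + u) * φ (0, 1) := by
    simpa [← hφ_mk] using hφ (f v + t, g v + u) ⟨v, hv, by simpa, by simpa⟩
  have hlim_fst {v : E} (hv : v ∈ s) {u : ℝ} (hu : 0 < u) :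
      0 ≤ f v * φ (1, 0) + (g v + u) * φ (0, 1) ∧ 0 ≤ φ (1, 0) :=
    nonneg_and_nonneg_of_forall_add_mul_nonneg fun t ht => by linarith [hpos hv ht hu]
  have hlim_snd {v : E} (hv : v ∈ s) :
      0 ≤ f v * φ (1, 0) + g v * φ (0, 1) ∧ 0 ≤ φ (0, 1) :=
    nonneg_and_nonneg_of_forall_add_mul_nonneg fun u hu => by linarith [(hlim_fst hv hu).1]
  obtain ⟨w, hw⟩ := hs
  have ha := (hlim_fst hw one_pos).2
  have hb := (hlim_snd hw).2
  refine ⟨_, _, ha, hb, (add_nonneg ha hb).lt_of_ne' fun h0 => ?_, fun v hv => ?_⟩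
  · obtain ⟨ha0, hb0⟩ := (add_eq_zero_iff_of_nonneg ha hb).1 h0
    simpa [ha0, hb0] using hpos hw one_pos one_pos
  · linarith [(hlim_snd hv).1]

theorem exists_convexCombo_nonneg_of_max_nonneg (hf : ConvexOn ℝ s f) (hg : ConvexOn ℝ s g)
    (h : ∀ v ∈ s, 0 ≤ max (f v) (g v)) :
    ∃ δ ∈ Icc (0 : ℝ) 1, ∀ v ∈ s, 0 ≤ δ * f v + (1 - δ) * g v := by
  rcases s.eq_empty_or_nonempty with rfl | hs
  · exact ⟨0, by simp, by simp⟩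
  obtain ⟨a, b, ha, hb, hab, hcomb⟩ := exists_multipliers_of_max_nonneg hf hg hs h
  refine ⟨a / (a + b), ⟨by positivity, div_le_one_of_le₀ (by linarith) hab.le⟩, fun v hv => ?_⟩
  have : a / (a + b) * f v + (1 - a / (a + b)) * g v = (a * f v + b * g v) / (a + b) := by
    field_simp
    ring
  rw [this]
  exact div_nonneg (hcomb v hv) hab.le

end ConvexAlternative

section Certificate

/-- A certificate that `q(v) = a₀ + a₁ v + a₂ v² + a₃ v³ + a₄ v⁴` is nonnegative on `[0, R]`: the
linear matrix equations say that `q(v)` is `(1, v, v²) Q (1, v, v²)ᵀ + tr (Z (F₀ + v F₁))`, where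
`F₀ + v F₁ = diag(v, R - v)`. -/
def HasCertificate (R a₀ a₁ a₂ a₃ a₄ : ℝ) : Prop :=
  ∃ (Z : Matrix (Fin 2) (Fin 2) ℝ) (Q : Matrix (Fin 3) (Fin 3) ℝ), Z.PosSemidef ∧ Q.PosSemidef ∧
    (Q * B0).trace = a₀ - (Z * !![(0 : ℝ), 0; 0, R]).trace ∧
    (Q * B1).trace = a₁ - (Z * !![(1 : ℝ), 0; 0, -1]).trace ∧
    (Q * B2).trace = a₂ ∧ (Q * B3).trace = a₃ ∧ (Q * B4).trace = a₄

variable (Q : Matrix (Fin 3) (Fin 3) ℝ)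

lemma trace_mul_B0 : (Q * B0).trace = Q 0 0 := by
  simp [B0, trace_fin_three, mul_apply, Fin.sum_univ_three]

lemma trace_mul_B1 : (Q * B1).trace = Q 0 1 + Q 1 0 := by
  simp [B1, trace_fin_three, mul_apply, Fin.sum_univ_three]

lemma trace_mul_B2 : (Q * B2).trace = Q 0 2 + Q 1 1 + Q 2 0 := by
  simp [B2, trace_fin_three, mul_apply, Fin.sum_univ_three]

lemma trace_mul_B3 : (Q * B3).trace = Q 1 2 + Q 2 1 := by
  simp [B3, trace_fin_three, mul_apply, Fin.sum_univ_three]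

lemma trace_mul_B4 : (Q * B4).trace = Q 2 2 := by
  simp [B4, trace_fin_three, mul_apply, Fin.sum_univ_three]

lemma trace_mul_diag_fin_two {S : Type*} [NonUnitalNonAssocSemiring S]
    (Z : Matrix (Fin 2) (Fin 2) S) (x y : S) :
    (Z * !![x, 0; 0, y]).trace = Z 0 0 * x + Z 1 1 * y := by
  simp [trace_fin_two, mul_apply, Fin.sum_univ_two]

lemma HasCertificate.nonneg {R a₀ a₁ a₂ a₃ a₄ : ℝ} (h : HasCertificate R a₀ a₁ a₂ a₃ a₄) {v : ℝ}
    (hv : v ∈ Icc 0 R) : 0 ≤ a₀ + a₁ * v + a₂ * v ^ 2 + a₃ * v ^ 3 + a₄ * v ^ 4 := by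
  obtain ⟨Z, Q, hZ, hQ, h₀, h₁, h₂, h₃, h₄⟩ := h
  have hQv : 0 ≤ ![1, v, v ^ 2] ⬝ᵥ Q *ᵥ ![1, v, v ^ 2] := by
    simpa using hQ.dotProduct_mulVec_nonneg ![1, v, v ^ 2]
  have hZv : 0 ≤ Z 0 0 * v + Z 1 1 * (R - v) :=
    add_nonneg (mul_nonneg hZ.diag_nonneg hv.1) (mul_nonneg hZ.diag_nonneg (sub_nonneg.2 hv.2))
  simp only [dotProduct, mulVec, Fin.sum_univ_three, cons_val] at hQv
  simp only [trace_mul_B0, trace_mul_B1, trace_mul_B2, trace_mul_B3, trace_mul_B4,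
    trace_mul_diag_fin_two] at h₀ h₁ h₂ h₃ h₄
  linear_combination hQv + hZv + h₀ + v * h₁ + v ^ 2 * h₂ + v ^ 3 * h₃ + v ^ 4 * h₄

lemma mul_sub_nonneg_of_isMinOn {f : ℝ → ℝ} {s : Set ℝ} {m D : ℝ} (hs : Convex ℝ s) (hm : m ∈ s)
    (hmin : IsMinOn f s m) (hD : HasDerivAt f D m) {y : ℝ} (hy : y ∈ s) : 0 ≤ D * (y - m) := by
  have := (IsMinOn.localize hmin).hasFDerivWithinAt_nonneg hD.hasFDerivAt.hasFDerivWithinAt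
    (sub_mem_posTangentConeAt_of_segment_subset (hs.segment_subset hm hy))
  simpa [mul_comm] using this

lemma exists_conic_decomposition_of_nonneg_endpoints {𝕜 : Type*} [CommRing 𝕜] [LinearOrder 𝕜]
    [IsStrictOrderedRing 𝕜] {R d r : 𝕜} (h₀ : 0 ≤ r) (hR : 0 ≤ r + d * R) :
    ∃ z₀ z₁ z₂ : 𝕜, 0 ≤ z₀ ∧ 0 ≤ z₁ ∧ 0 ≤ z₂ ∧ r = z₀ + z₂ * R ∧ d = z₁ - z₂ := by
  rcases le_total 0 d with hd | hd
  · exact ⟨r, d, 0, h₀, hd, le_rfl, by ring, by ring⟩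
  · exact ⟨r + d * R, 0, -d, hR, le_rfl, neg_nonneg.2 hd, by ring, by ring⟩

-- Certifies `z₀ + z₁ v + z₂ (R - v) + β (v² + p v + q)² + S (v - m)²`.
lemma hasCertificate_of_sumSq {R z₀ z₁ z₂ β S : ℝ} (hz₀ : 0 ≤ z₀) (hz₁ : 0 ≤ z₁) (hz₂ : 0 ≤ z₂)
    (hβ : 0 ≤ β) (hS : 0 ≤ S) (m p q : ℝ) :
    HasCertificate R (z₀ + z₂ * R + β * q ^ 2 + S * m ^ 2)
      (z₁ - z₂ + 2 * β * p * q - 2 * S * m) (β * (p ^ 2 + 2 * q) + S) (2 * β * p) β := by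
  have hrank (x : Fin 3 → ℝ) : (vecMulVec x x).PosSemidef := by
    simpa using posSemidef_vecMulVec_self_star x
  refine ⟨diagonal ![z₁, z₂], z₀ • vecMulVec ![1, 0, 0] ![1, 0, 0]
    + β • vecMulVec ![q, p, 1] ![q, p, 1] + S • vecMulVec ![-m, 1, 0] ![-m, 1, 0],
    ?_, (((hrank _).smul hz₀).add ((hrank _).smul hβ)).add ((hrank _).smul hS), ?_⟩
  · exact PosSemidef.diagonal (by simpa [Pi.le_def, Fin.forall_fin_two] using ⟨hz₁, hz₂⟩)
  · simp only [trace_mul_B0, trace_mul_B1, trace_mul_B2, trace_mul_B3, trace_mul_B4,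
      trace_mul_diag_fin_two, Matrix.add_apply, Matrix.smul_apply, vecMulVec_apply,
      diagonal_apply_eq, smul_eq_mul, cons_val]
    refine ⟨?_, ?_, ?_, ?_, ?_⟩ <;> ring

-- Completing the fourth power brings every convex polynomial of degree at most four to this form.
theorem hasCertificate_of_nonneg {R β b s t r : ℝ} (hR : 0 ≤ R) (hβ : 0 ≤ β) (hs : 0 ≤ s)
    (h : ∀ v ∈ Icc 0 R, 0 ≤ β * (v - b) ^ 4 + s * v ^ 2 + t * v + r) :
    HasCertificate R (β * b ^ 4 + r) (-4 * β * b ^ 3 + t) (6 * β * b ^ 2 + s) (-4 * β * b) β := by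
  obtain ⟨m, hm, hmin⟩ := isCompact_Icc.exists_isMinOn (nonempty_Icc.2 hR)
    (f := fun v : ℝ => β * (v - b) ^ 4 + s * v ^ 2 + t * v + r) (by fun_prop)
  set D := 4 * β * (m - b) ^ 3 + 2 * s * m + t with hD
  have hderiv : HasDerivAt (fun v : ℝ => β * (v - b) ^ 4 + s * v ^ 2 + t * v + r) D m := by
    have h₄ := (((hasDerivAt_id m).sub_const b).pow 4).const_mul β
    have h₂ := (hasDerivAt_pow 2 m).const_mul s
    have h₁ := (hasDerivAt_id m).const_mul t
    refine (((h₄.add h₂).add h₁).add_const r).congr_deriv ?_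
    simp only [hD, id_eq]
    push_cast
    ring
  have htangent {y : ℝ} (hy : y ∈ Icc 0 R) :
      0 ≤ β * (m - b) ^ 4 + s * m ^ 2 + t * m + r + D * (y - m) :=
    add_nonneg (h m hm) (mul_sub_nonneg_of_isMinOn (convex_Icc 0 R) hm hmin hderiv hy)
  obtain ⟨z₀, z₁, z₂, hz₀, hz₁, hz₂, hr, hd⟩ := exists_conic_decomposition_of_nonneg_endpoints
    (R := R) (d := D) (r := β * (m - b) ^ 4 + s * m ^ 2 + t * m + r - D * m)
    (by linarith [htangent (left_mem_Icc.2 hR)]) (by linarith [htangent (right_mem_Icc.2 hR)])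
  convert hasCertificate_of_sumSq (R := R) hz₀ hz₁ hz₂ hβ
    (show 0 ≤ 2 * β * (m - b) ^ 2 + s by positivity) m (-2 * b) (2 * b * m - m ^ 2) using 1
  · rw [← hr, hD]; ring
  · rw [← hd, hD]; ring
  · ring
  · ring

end Certificate

section Revenue

lemma convexOn_quadratic {E : Set ℝ} (hE : Convex ℝ E) {s : ℝ} (hs : 0 ≤ s) (t r : ℝ) :
    ConvexOn ℝ E fun v => s * v ^ 2 + t * v + r := by
  have h_sq : ConvexOn ℝ E fun v : ℝ => s * v ^ 2 :=
    ((even_two.convexOn_pow).subset (subset_univ E) hE).smul hs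
  have h_lin : ConvexOn ℝ E fun v : ℝ => t * v := (LinearMap.mulLeft ℝ t).convexOn hE
  exact (h_sq.add h_lin).add_const r

variable {R l₁ l₂ l₃ : ℝ}

lemma hasCertificate_quartic_iff {α β : ℝ} (hR : 0 ≤ R) (hα : 0 ≤ α) (hβ : 0 ≤ β) (hl₂ : 0 ≤ l₂)
    (b c : ℝ) :
    HasCertificate R (α * b ^ 2 + β * b ^ 4 + c + l₃) (-2 * α * b - 4 * β * b ^ 3 + l₁)
        (α + 6 * β * b ^ 2 + l₂) (-4 * β * b) β ↔
      ∀ v ∈ Icc 0 R,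
        0 ≤ α * (v - b) ^ 2 + β * (v - b) ^ 4 + c + l₁ * v + l₂ * v ^ 2 + l₃ := by
  refine ⟨fun h v hv => by linarith [h.nonneg hv], fun h => ?_⟩
  convert hasCertificate_of_nonneg (s := α + l₂) (t := l₁ - 2 * α * b) (b := b)
    (r := α * b ^ 2 + c + l₃) hR hβ (add_nonneg hα hl₂) (fun v hv => by linarith [h v hv]) using 1
    <;> ring

lemma exists_hasCertificate_max_iff (hR : 0 ≤ R) (hl₂ : 0 ≤ l₂) (α β b c : ℝ) :
    (∃ δ ∈ Icc (0 : ℝ) 1, HasCertificate R (δ * α * b ^ 2 + δ * β * b ^ 4 + c + l₃)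
        (-(δ * α * b) - δ * β * b ^ 3 + l₁) l₂ 0 0) ↔
      ∀ v ∈ Icc 0 R, 0 ≤ max (-(α * b + β * b ^ 3) * v + (α * b ^ 2 + β * b ^ 4 + c)) c
        + l₁ * v + l₂ * v ^ 2 + l₃ := by
  constructor
  · rintro ⟨δ, ⟨hδ₀, hδ₁⟩, h⟩ v hv
    have hle := Convex.combo_le_max
      (-(α * b + β * b ^ 3) * v + (α * b ^ 2 + β * b ^ 4 + c)) c hδ₀ (sub_nonneg.2 hδ₁) (by ring)
    rw [smul_eq_mul, smul_eq_mul] at hle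
    linarith [h.nonneg hv]
  · intro h
    obtain ⟨δ, hδ, hcomb⟩ := exists_convexCombo_nonneg_of_max_nonneg
      (convexOn_quadratic (convex_Icc 0 R) hl₂ (l₁ - (α * b + β * b ^ 3))
        (α * b ^ 2 + β * b ^ 4 + c + l₃))
      (convexOn_quadratic (convex_Icc 0 R) hl₂ l₁ (c + l₃)) fun v hv => by
        refine (h v hv).trans_eq ?_
        rw [add_assoc, add_assoc, max_add]
        congr 1 <;> ring
    refine ⟨δ, hδ, ?_⟩
    convert hasCertificate_of_nonneg (β := 0) (b := 0) (s := l₂)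
      (t := -(δ * α * b) - δ * β * b ^ 3 + l₁) (r := δ * α * b ^ 2 + δ * β * b ^ 4 + c + l₃)
      hR le_rfl hl₂ (fun v hv => by linarith [hcomb v hv]) using 1 <;> ring

variable {n : ℕ} {al be b c : Fin n → ℝ} {γ1 γ2 val : ℝ}

lemma mem_RevSDPVals_iff_hasCertificate :
    val ∈ RevSDPVals al be b c R γ1 γ2 ↔ ∃ l : ℝ × ℝ × ℝ, 0 ≤ l.1 ∧ 0 ≤ l.2.1 ∧
      (∀ k, HasCertificate R (al k * b k ^ 2 + be k * b k ^ 4 + c k + l.2.2)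
        (-2 * al k * b k - 4 * be k * b k ^ 3 + l.1) (al k + 6 * be k * b k ^ 2 + l.2.1)
        (-4 * be k * b k) (be k)) ∧
      (∀ k, ∃ δ ∈ Icc (0 : ℝ) 1,
        HasCertificate R (δ * al k * b k ^ 2 + δ * be k * b k ^ 4 + c k + l.2.2)
          (-(δ * al k * b k) - δ * be k * b k ^ 3 + l.1) l.2.1 0 0) ∧
      val = -l.1 * γ1 - l.2.1 * γ2 - l.2.2 := by
  constructor
  · rintro ⟨l₁, l₂, l₃, δ, Z, Z', Q, Q', hl₁, hl₂, hδ, hZ, hZ', hQ, hQ',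
      h₀, h₁, h₂, h₃, h₄, h₀', h₁', h₂', h₃', h₄', hval⟩
    exact ⟨(l₁, l₂, l₃), hl₁, hl₂,
      fun k => ⟨Z k, Q k, hZ k, hQ k, h₀ k, h₁ k, h₂ k, h₃ k, h₄ k⟩,
      fun k => ⟨δ k, hδ k, Z' k, Q' k, hZ' k, hQ' k, h₀' k, h₁' k, h₂' k, h₃' k, h₄' k⟩, hval⟩
  · rintro ⟨⟨l₁, l₂, l₃⟩, hl₁, hl₂, hpoly, hmax, hval⟩
    choose Z Q hZ hQ h₀ h₁ h₂ h₃ h₄ using hpoly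
    choose δ hδ Z' Q' hZ' hQ' h₀' h₁' h₂' h₃' h₄' using hmax
    exact ⟨l₁, l₂, l₃, δ, Z, Z', Q, Q', hl₁, hl₂, hδ, hZ, hZ', hQ, hQ',
      h₀, h₁, h₂, h₃, h₄, h₀', h₁', h₂', h₃', h₄', hval⟩

variable [NeZero n]

lemma continuous_gRev : Continuous (gRev al be b c) :=
  Continuous.finset_inf'_apply _ fun _ _ => by split_ifs <;> fun_prop

lemma le_gRev_iff {x v : ℝ} :
    x ≤ gRev al be b c v ↔
      (∀ k, x ≤ al k * (v - b k) ^ 2 + be k * (v - b k) ^ 4 + c k) ∧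
      ∀ k, x ≤ max (-(al k * b k + be k * b k ^ 3) * v
        + (al k * b k ^ 2 + be k * b k ^ 4 + c k)) (c k) := by
  simp [gRev, Finset.le_inf'_iff, Prod.forall, Fin.forall_fin_two]

theorem mem_RevSDPVals_iff (hR : 0 ≤ R) (hal : ∀ k, 0 ≤ al k) (hbe : ∀ k, 0 ≤ be k) :
    val ∈ RevSDPVals al be b c R γ1 γ2 ↔
      ∃ l ∈ dualFeasible (Icc 0 R) (gRev al be b c), val = -l.1 * γ1 - l.2.1 * γ2 - l.2.2 := by
  rw [mem_RevSDPVals_iff_hasCertificate]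
  refine exists_congr fun l => ?_
  have h_iff (x v : ℝ) : 0 ≤ x + l.1 * v + l.2.1 * v ^ 2 + l.2.2 ↔
      -(l.1 * v + l.2.1 * v ^ 2 + l.2.2) ≤ x := by
    rw [neg_le_iff_add_nonneg, ← add_assoc, ← add_assoc]
  simp only [dualFeasible, mem_ofPred_eq, and_assoc]
  refine and_congr_right fun _ => and_congr_right fun hl₂ => ?_
  simp only [hasCertificate_quartic_iff hR (hal _) (hbe _) hl₂,
    exists_hasCertificate_max_iff hR hl₂, h_iff, le_gRev_iff, forall_and,
    forall_comm (α := Fin n), and_assoc]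

theorem revenue_sdp_duality_general {p : ℝ} (hal : ∀ k, 0 ≤ al k) (hbe : ∀ k, 0 ≤ be k)
    (hint : (γ1, γ2, 1) ∈ interior (momentSet (Icc 0 R)))
    (hp : IsGLB (RevVals al be b c R γ1 γ2) p) :
    IsGreatest (RevSDPVals al be b c R γ1 γ2) p := by
  have hg : ContinuousOn (gRev al be b c) (Icc 0 R) := continuous_gRev.continuousOn
  have hR : 0 ≤ R := by
    obtain ⟨-, μ, _, hμ, -⟩ := hp.nonempty
    have hne : (Icc 0 R).Nonempty := nonempty_of_measure_ne_zero (μ := μ) <| by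
      rw [(prob_compl_eq_zero_iff measurableSet_Icc).1 hμ]
      exact one_ne_zero
    exact nonempty_Icc.1 hne
  replace hp : IsGLB (momentValues (Icc 0 R) (gRev al be b c) γ1 γ2) p := hp
  constructor
  · exact (mem_RevSDPVals_iff hR hal hbe).2 (exists_dualFeasible_of_isGLB isCompact_Icc hg hint hp)
  · rintro _ hval
    obtain ⟨l, hl, rfl⟩ := (mem_RevSDPVals_iff hR hal hbe).1 hval
    exact hp.2 fun _ ht => le_of_dualFeasible_of_mem_momentValues isCompact_Icc hg hl ht

end Revenue

/-- Exact SDP reformulation of the revenue maximization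
moment problem: `min (V) = max (V1)`. -/
theorem revenue_sdp_duality {n : ℕ} [NeZero n]
    (al be b c : Fin n → ℝ) (R γ1 γ2 : ℝ) (hR : 0 < R)
    (hal : ∀ k, 0 ≤ al k) (hbe : ∀ k, 0 ≤ be k) (hb : ∀ k, 0 ≤ b k)
    (hc : ∀ k, c k ≤ -(al k * b k ^ 2) - be k * b k ^ 4)
    (hint : ((γ1, γ2, (1 : ℝ)) : ℝ × ℝ × ℝ) ∈ interior
      {q : ℝ × ℝ × ℝ | ∃ μ : Measure ℝ, IsFiniteMeasure μ ∧
        μ (Set.Icc 0 R)ᶜ = 0 ∧ ∃ s1 s2 : ℝ, 0 ≤ s1 ∧ 0 ≤ s2 ∧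
        q.1 = (∫ ω, ω ∂μ) + s1 ∧ q.2.1 = (∫ ω, ω ^ 2 ∂μ) + s2 ∧
        q.2.2 = (μ Set.univ).toReal})
    (p : ℝ) (hmin : IsLeast (RevVals al be b c R γ1 γ2) p) :
    IsGreatest (RevSDPVals al be b c R γ1 γ2) p := by
  exact revenue_sdp_duality_general hal hbe hint hmin.isGLB

end
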